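/- Additive composition of quantitative dependencies along an n-step dependency chain: let w be an infinite trace, κ a cost function, a₀, a₁, …, a_n atomic propositions (n ≥ 1), and q₁, …, q_n ∈ ℕ. If for every m with 1 ≤ m ≤ n the dependency (a_{m-1} ∘≤q_m a_m) holds at every position of w, then (a₀ ∘≤(q₁+⋯+q_n) a_n) holds at every position of w, i.e., whenever a₀ ∈ w(i) there exists k ≥ i with a_n ∈ w(k) and C(i,k) ≤ q₁ + ⋯ + q_n. -/

import Mathlib

section

variable {AP M : Type*} [AddCommMonoid M] [Preorder M]

/-- The satisfaction relation `w, i ⊨ a ∘≤q b` of the quantitative dependency operator, with the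
cumulative cost `C(i, j)` written as a sum over `Finset.Ico i j`. Costs and bounds may lie in any
preordered commutative monoid. -/
def QuantDep (w : ℕ → Set AP) (κ : ℕ → M) (i : ℕ) (a : AP) (q : M) (b : AP) : Prop :=
  a ∈ w i → ∃ j ≥ i, b ∈ w j ∧ ∑ k ∈ Finset.Ico i j, κ k ≤ q

namespace QuantDep

variable {w : ℕ → Set AP} {κ : ℕ → M} {i : ℕ}

theorem refl (w : ℕ → Set AP) (κ : ℕ → M) (i : ℕ) (a : AP) : QuantDep w κ i a 0 a :=
  fun ha => ⟨i, le_rfl, ha, by simp⟩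

theorem trans [IsOrderedAddMonoid M] {a b c : AP} {p q : M} (hab : QuantDep w κ i a p b)
    (hbc : ∀ j ≥ i, QuantDep w κ j b q c) : QuantDep w κ i a (p + q) c := by
  intro ha
  obtain ⟨j, hij, hb, hp⟩ := hab ha
  obtain ⟨k, hjk, hc, hq⟩ := hbc j hij hb
  refine ⟨k, hij.trans hjk, hc, ?_⟩
  calc ∑ l ∈ Finset.Ico i k, κ l
      = ∑ l ∈ Finset.Ico i j, κ l + ∑ l ∈ Finset.Ico j k, κ l :=
        (Finset.sum_Ico_consecutive κ hij hjk).symm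
    _ ≤ p + q := add_le_add hp hq

end QuantDep

theorem quantDep_chain_general [IsOrderedAddMonoid M] {w : ℕ → Set AP} {κ : ℕ → M} {i : ℕ}
    {a : ℕ → AP} {q : ℕ → M} {n : ℕ}
    (h : ∀ m < n, ∀ j ≥ i, QuantDep w κ j (a m) (q (m + 1)) (a (m + 1))) :
    QuantDep w κ i (a 0) (∑ m ∈ Finset.Icc 1 n, q m) (a n) := by
  induction n with
  | zero => simpa using QuantDep.refl w κ i (a 0)
  | succ n ih =>
    rw [Finset.sum_Icc_succ_top n.succ_pos]
    exact (ih fun m hm => h m (hm.trans n.lt_succ_self)).trans (h n n.lt_succ_self)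

end

/-- Additive composition of quantitative dependencies along an `n`-step
dependency chain: if for every `m` with `1 ≤ m ≤ n` the dependency
`a_{m-1} ∘≤q_m a_m` holds at every position, then
`a₀ ∘≤(q₁+⋯+q_n) a_n` holds at every position. -/
theorem quantDep_chain {AP : Type*} (w : ℕ → Set AP) (κ : ℕ → ℕ)
    (n : ℕ) (hn : 1 ≤ n) (a : ℕ → AP) (q : ℕ → ℕ)
    (h : ∀ m, 1 ≤ m → m ≤ n → ∀ i, a (m - 1) ∈ w i →
      ∃ j ≥ i, a m ∈ w j ∧ ∑ k ∈ Finset.Ico i j, κ k ≤ q m) :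
    ∀ i, a 0 ∈ w i →
      ∃ k ≥ i, a n ∈ w k ∧
        ∑ l ∈ Finset.Ico i k, κ l ≤ ∑ m ∈ Finset.Icc 1 n, q m :=
  fun _ => quantDep_chain_general fun m hm j _ => h (m + 1) m.succ_pos hm j
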